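/- For every real ε > 0 there exists t₀ such that for all integers t ≥ t₀ the 4-color Ramsey number of K_t satisfies r(t;4) > 2^{(5/4 − ε)·t}; that is, there exists a coloring of the edges of the complete graph on N = ⌈2^{(5/4 − ε)·t}⌉ vertices with 4 colors containing no monochromatic clique of size t. -/

import Mathlib

/-!
To add `k` further colours to a random two-colouring, map the vertices at random, `k` times, into
the symplectic space `𝔽₂^(2h)`. An edge receives a new colour whose map sends its ends to vectors
with product `1`, and its random old colour if there is none. No `2h + 2` vertices form a clique of
a new colour, because an even number of vectors with all pairwise products `1` is linearly
independent. A clique of an old colour is isotropic under all `k` maps, and few tuples are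
isotropic, since they span a space of dimension at most `h`. With `t = 2h + 2`, a random `t`-tuple
is isotropic with probability at most `2^(-3t²/8 + O(t))`, and a clique of size `t` is monochromatic
in the random colouring with probability `2^(-t²/2 + O(t))`, so the union bound allows
`2^((3k/8 + 1/2) t - O(1))` vertices.
-/

open Module Finset

/-- `RamseyColorable V C t` says that the edges of the complete graph on `V` have a colouring by
`C` without a monochromatic clique of size `t`; for finite types this is `r(t; |C|) > |V|`. A
colouring is a symmetric function of two vertices, whose values on the diagonal are irrelevant. -/
def RamseyColorable (V C : Type*) (t : ℕ) : Prop :=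
  ∃ χ : V → V → C, (∀ x y, χ x y = χ y x) ∧
    ¬ ∃ (S : Finset V) (c : C), S.card = t ∧ ∀ x ∈ S, ∀ y ∈ S, x ≠ y → χ x y = c

namespace RamseyColorable

variable {V C C' : Type*} {s t : ℕ}

theorem of_forall_embedding (χ : V → V → C) (hχ : ∀ x y, χ x y = χ y x)
    (H : ∀ (e : Fin t ↪ V) (c : C), ¬ ∀ i j, i ≠ j → χ (e i) (e j) = c) :
    RamseyColorable V C t := by
  refine ⟨χ, hχ, ?_⟩
  rintro ⟨S, c, hS, hc⟩
  let e := (S.equivFinOfCardEq hS).symm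
  exact H (e.toEmbedding.trans (.subtype _)) c fun i j hij =>
    hc _ (e i).2 _ (e j).2 (Subtype.val_injective.ne (e.injective.ne hij))

theorem mono (h : RamseyColorable V C s) (hst : s ≤ t) : RamseyColorable V C t := by
  obtain ⟨χ, hχ, H⟩ := h
  refine ⟨χ, hχ, ?_⟩
  rintro ⟨S, c, rfl, hc⟩
  obtain ⟨S', hS', hcard⟩ := exists_subset_card_eq hst
  exact H ⟨S', c, hcard, fun x hx y hy => hc x (hS' hx) y (hS' hy)⟩

theorem congr_colors (h : RamseyColorable V C t) (e : C ≃ C') : RamseyColorable V C' t := by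
  obtain ⟨χ, hχ, H⟩ := h
  refine ⟨fun x y => e (χ x y), fun x y => congrArg e (hχ x y), ?_⟩
  rintro ⟨S, c, hS, hc⟩
  exact H ⟨S, e.symm c, hS, fun x hx y hy hxy => e.eq_symm_apply.mpr (hc x hx y hy hxy)⟩

end RamseyColorable

section Density

variable {α β ι κ V X Y : Type*} [Fintype α] [Fintype β] [Fintype ι] [Fintype κ] [Fintype V]
  [Fintype X] [Fintype Y]

theorem dens_product (s : Finset α) (t : Finset β) : (s ×ˢ t).dens = s.dens * t.dens := by
  simp only [dens_eq_card_div_card, card_product, Fintype.card_prod, Nat.cast_mul,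
    mul_div_mul_comm]

theorem dens_piFinset_const [DecidableEq κ] (s : Finset α) :
    (Fintype.piFinset fun _ : κ => s).dens = s.dens ^ Fintype.card κ := by
  simp only [dens_eq_card_div_card, Fintype.card_piFinset, prod_const, card_univ,
    Fintype.card_fun, Nat.cast_pow, div_pow]

omit [Fintype ι] in
theorem exists_forall_notMem_of_sum_dens_lt_one [Nonempty α] {E : Finset ι} {A : ι → Finset α}
    (h : ∑ i ∈ E, (A i).dens < 1) : ∃ a, ∀ i ∈ E, a ∉ A i := by
  classical
  have hne : E.biUnion A ≠ univ := dens_ne_one.mp (dens_biUnion_le.trans_lt h).ne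
  obtain ⟨a, ha⟩ := not_forall.mp (mt eq_univ_iff_forall.mpr hne)
  exact ⟨a, fun i hi hai => ha (mem_biUnion.mpr ⟨i, hi, hai⟩)⟩

variable [DecidableEq ι]

-- Swapping the values of `f : V → X` along `e` with those of `φ : ι → X` is injective on pairs.
theorem dens_filter_comp_mem_le [DecidableEq V] [DecidableEq X] (e : ι ↪ V) (A : Finset (ι → X)) :
    ({f | f ∘ e ∈ A} : Finset (V → X)).dens ≤ A.dens := by
  obtain h | h := isEmpty_or_nonempty (V → X)
  · simp [dens_eq_card_div_card]
  have hpos : 0 < Fintype.card (V → X) := Fintype.card_pos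
  have hpos' : 0 < Fintype.card (ι → X) := Fintype.card_pos_iff.mpr ⟨h.some ∘ e⟩
  rw [dens_eq_card_div_card, dens_eq_card_div_card,
    div_le_div_iff₀ (by exact_mod_cast hpos) (by exact_mod_cast hpos')]
  norm_cast
  rw [← card_univ, ← card_univ, ← card_product, ← card_product]
  refine card_le_card_of_injOn (fun p => (p.1 ∘ e, Function.extend e p.2 p.1))
    (fun p hp => by simpa using hp) ?_
  rintro ⟨f, φ⟩ - ⟨f', φ'⟩ - h
  obtain ⟨hcomp, hextend⟩ := Prod.mk.inj h
  refine Prod.ext (funext fun x => ?_) (funext fun i => ?_)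
  · by_cases hx : ∃ i, e i = x
    · obtain ⟨i, rfl⟩ := hx
      exact congrFun hcomp i
    · simpa only [Function.extend_apply' _ _ _ hx] using congrFun hextend x
  · simpa only [e.injective.extend_apply] using congrFun hextend (e i)

theorem exists_maps_avoiding [Nonempty X] [Nonempty Y]
    {A : Finset (ι → X)} {M : Finset (Sym2 ι → Y)}
    (h : Fintype.card V ^ Fintype.card ι * (A.dens ^ Fintype.card κ * M.dens) < 1) :
    ∃ (f : κ → V → X) (g : Sym2 V → Y), ∀ e : ι ↪ V,
      ¬ ((∀ k, f k ∘ e ∈ A) ∧ g ∘ Sym2.map e ∈ M) := by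
  classical
  let bad (e : ι ↪ V) : Finset ((κ → V → X) × (Sym2 V → Y)) :=
    Fintype.piFinset (fun _ => {f | f ∘ e ∈ A}) ×ˢ ({g | g ∘ Sym2.map e ∈ M} : Finset _)
  have hbad (e : ι ↪ V) : (bad e).dens ≤ A.dens ^ Fintype.card κ * M.dens := by
    rw [dens_product, dens_piFinset_const]
    gcongr
    · exact dens_filter_comp_mem_le e A
    · exact dens_filter_comp_mem_le ⟨Sym2.map e, Sym2.map.injective e.injective⟩ M
  have hcard : Fintype.card (ι ↪ V) ≤ Fintype.card V ^ Fintype.card ι :=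
    Fintype.card_embedding_eq.trans_le (Nat.descFactorial_le_pow _ _)
  have hsum : ∑ e, (bad e).dens < 1 :=
    calc ∑ e, (bad e).dens
        ≤ Fintype.card (ι ↪ V) * (A.dens ^ Fintype.card κ * M.dens) := by
          simpa using sum_le_card_nsmul univ _ _ fun e _ => hbad e
      _ ≤ Fintype.card V ^ Fintype.card ι * (A.dens ^ Fintype.card κ * M.dens) := by
          gcongr
          exact_mod_cast hcard
      _ < 1 := h
  obtain ⟨⟨f, g⟩, hfg⟩ := exists_forall_notMem_of_sum_dens_lt_one hsum
  exact ⟨f, g, fun e he => hfg e (mem_univ e) (by simpa [bad] using he)⟩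

end Density

theorem succ_choose_two (n : ℕ) : (n + 1).choose 2 = n + n.choose 2 := by
  rw [Nat.choose_succ_succ' n 1, Nat.choose_one_right]

section Monochromatic

variable (ι Y : Type*) [Fintype ι] [DecidableEq ι] [Fintype Y]

open Classical in
/-- The colourings of the edges of the complete graph on `ι` with only one colour. The loops, which
`Sym2` contains, are coloured arbitrarily. -/
noncomputable def monochromaticColorings : Finset (Sym2 ι → Y) :=
  {g | ∃ c, ∀ i j, i ≠ j → g s(i, j) = c}

variable {ι Y} in
theorem mem_monochromaticColorings {g : Sym2 ι → Y} :
    g ∈ monochromaticColorings ι Y ↔ ∃ c, ∀ i j, i ≠ j → g s(i, j) = c := by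
  simp only [monochromaticColorings, mem_filter, mem_univ, true_and]

theorem card_monochromaticColorings_le :
    #(monochromaticColorings ι Y) ≤ Fintype.card Y ^ (Fintype.card ι + 1) := by
  classical
  let G (p : Y × (ι → Y)) : Sym2 ι → Y :=
    Sym2.lift ⟨fun i j => if i = j then p.2 i else p.1, fun i j => by grind⟩
  have hsub : monochromaticColorings ι Y ⊆ univ.image G := by
    intro g hg
    obtain ⟨c, hc⟩ := mem_monochromaticColorings.mp hg
    refine mem_image.mpr ⟨(c, fun i => g s(i, i)), mem_univ _, funext fun e => ?_⟩
    induction e using Sym2.ind with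
    | _ i j =>
      obtain rfl | hij := eq_or_ne i j
      · simp [G]
      · simp [G, hij, hc i j hij]
  calc #(monochromaticColorings ι Y) ≤ #(univ.image G) := card_le_card hsub
    _ ≤ Fintype.card (Y × (ι → Y)) := card_image_le
    _ = Fintype.card Y ^ (Fintype.card ι + 1) := by
      rw [Fintype.card_prod, Fintype.card_fun, pow_succ']

theorem dens_monochromaticColorings_le [Nonempty Y] :
    (monochromaticColorings ι Y).dens ≤
      Fintype.card Y / Fintype.card Y ^ (Fintype.card ι).choose 2 := by
  have hY : (Fintype.card Y : ℚ≥0) ≠ 0 := Nat.cast_ne_zero.mpr Fintype.card_ne_zero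
  calc (monochromaticColorings ι Y).dens
      ≤ Fintype.card Y ^ (Fintype.card ι + 1) /
          Fintype.card Y ^ (Fintype.card ι + (Fintype.card ι).choose 2) := by
        rw [dens_eq_card_div_card, Fintype.card_fun, Sym2.card, succ_choose_two, Nat.cast_pow]
        gcongr
        exact_mod_cast card_monochromaticColorings_le ι Y
    _ = Fintype.card Y / Fintype.card Y ^ (Fintype.card ι).choose 2 := by
        rw [pow_succ, pow_add, mul_div_mul_left _ _ (pow_ne_zero _ hY)]

end Monochromatic

theorem linearIndependent_of_pairwise_eq_one {R E ι : Type*} [CommRing R] [CharP R 2]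
    [AddCommGroup E] [Module R E] [Fintype ι] {B : LinearMap.BilinForm R E} (hB : B.IsAlt)
    (hι : Even (Fintype.card ι)) {v : ι → E} (hv : ∀ i j, i ≠ j → B (v i) (v j) = 1) :
    LinearIndependent R v := by
  classical
  rw [Fintype.linearIndependent_iff]
  intro c hc
  have hc_eq_sum (j : ι) : c j = ∑ i, c i := by
    have hpair : ∑ i, c i * B (v i) (v j) = 0 := by
      simpa using congrArg (fun x => B x (v j)) hc
    rw [← add_sum_erase _ _ (mem_univ j), hB.self_eq_zero, mul_zero, zero_add] at hpair
    rw [← add_sum_erase _ c (mem_univ j), left_eq_add, ← hpair]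
    exact sum_congr rfl fun i hi => by rw [hv i j (ne_of_mem_erase hi), mul_one]
  have hsum : ∑ i, c i = 0 := by
    have hcard : (Fintype.card ι : R) = 0 := (CharP.cast_eq_zero_iff R 2 _).mpr hι.two_dvd
    rw [sum_congr rfl fun j _ => hc_eq_sum j, sum_const, card_univ, nsmul_eq_mul, hcard, zero_mul]
  exact fun j => (hc_eq_sum j).trans hsum

section Isotropic

variable {R E : Type*} [CommRing R] [AddCommGroup E] [Module R E]

theorem mem_orthogonal_sup_span_singleton {B : LinearMap.BilinForm R E} {W : Submodule R E}
    {u v : E} : u ∈ B.orthogonal (W ⊔ R ∙ v) ↔ u ∈ B.orthogonal W ∧ B v u = 0 := by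
  have hker (N : Submodule R E) : u ∈ B.orthogonal N ↔ N ≤ LinearMap.ker (B.flip u) := Iff.rfl
  rw [hker, hker, sup_le_iff, Submodule.span_singleton_le_iff_mem, LinearMap.mem_ker,
    LinearMap.BilinForm.flip_apply]

theorem sup_span_singleton_le_orthogonal {B : LinearMap.BilinForm R E} (hB : B.IsAlt)
    {W : Submodule R E} (hW : W ≤ B.orthogonal W) {v : E} (hv : v ∈ B.orthogonal W) :
    W ⊔ R ∙ v ≤ B.orthogonal (W ⊔ R ∙ v) := by
  refine sup_le (fun w hw => ?_) ((Submodule.span_singleton_le_iff_mem _ _).mpr ?_)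
  · exact mem_orthogonal_sup_span_singleton.mpr ⟨hW hw, hB.isRefl _ _ (hv w hw)⟩
  · exact mem_orthogonal_sup_span_singleton.mpr ⟨hv, hB.self_eq_zero v⟩

variable [Fintype E] (B : LinearMap.BilinForm R E) (W : Submodule R E)

open Classical in
/-- The tuples of length `s` that are pairwise orthogonal and orthogonal to `W`. Those with `W = ⊥`
are counted by induction on `s`, with `W` the span of the entries already chosen. -/
noncomputable def isotropicTuples (s : ℕ) : Finset (Fin s → E) :=
  {w | (∀ i j, B (w i) (w j) = 0) ∧ ∀ i, w i ∈ B.orthogonal W}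

variable {B W}

theorem mem_isotropicTuples {s : ℕ} {w : Fin s → E} :
    w ∈ isotropicTuples B W s ↔ (∀ i j, B (w i) (w j) = 0) ∧ ∀ i, w i ∈ B.orthogonal W := by
  simp only [isotropicTuples, mem_filter, mem_univ, true_and]

theorem tail_mem_isotropicTuples {s : ℕ} {w : Fin (s + 1) → E}
    (hw : w ∈ isotropicTuples B W (s + 1)) :
    Fin.tail w ∈ isotropicTuples B (W ⊔ R ∙ w 0) s := by
  obtain ⟨hpair, horth⟩ := mem_isotropicTuples.mp hw
  exact mem_isotropicTuples.mpr ⟨fun i j => hpair _ _,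
    fun i => mem_orthogonal_sup_span_singleton.mpr ⟨horth _, hpair _ _⟩⟩

open Classical in
theorem card_isotropicTuples_succ_le_sum (B : LinearMap.BilinForm R E) (W : Submodule R E)
    (s : ℕ) :
    #(isotropicTuples B W (s + 1)) ≤
      ∑ v with v ∈ B.orthogonal W, #(isotropicTuples B (W ⊔ R ∙ v) s) := by
  have hmaps : Set.MapsTo (fun w : Fin (s + 1) → E => w 0) (isotropicTuples B W (s + 1))
      ({v | v ∈ B.orthogonal W} : Finset E) := fun w hw => by
    simpa using (mem_isotropicTuples.mp hw).2 0
  rw [card_eq_sum_card_fiberwise hmaps]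
  refine sum_le_sum fun v _ => card_le_card_of_injOn Fin.tail ?_ ?_
  · intro w hw
    obtain ⟨hwiso, rfl⟩ := mem_filter.mp hw
    exact tail_mem_isotropicTuples hwiso
  · intro w hw w' hw' htail
    have hhead : w 0 = w' 0 := (mem_filter.mp hw).2.trans (mem_filter.mp hw').2.symm
    rw [← Fin.cons_self_tail w, ← Fin.cons_self_tail w', htail, hhead]

end Isotropic

section IsotropicCount

variable {K E : Type*} [Field K] [Fintype K] [AddCommGroup E] [Module K E] [Fintype E]
  {B : LinearMap.BilinForm K E} {W : Submodule K E}

theorem card_filter_mem_submodule (W : Submodule K E) [DecidablePred (· ∈ W)] :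
    #{v | v ∈ W} = Fintype.card K ^ finrank K W := by
  rw [← Fintype.card_subtype]
  exact Module.card_eq_pow_finrank

theorem card_isotropicTuples_succ_le {s C : ℕ}
    (hC : ∀ v ∈ B.orthogonal W, v ∉ W → #(isotropicTuples B (W ⊔ K ∙ v) s) ≤ C) :
    #(isotropicTuples B W (s + 1)) ≤
      Fintype.card K ^ finrank K W * #(isotropicTuples B W s) +
        Fintype.card K ^ finrank K (B.orthogonal W) * C := by
  classical
  refine (card_isotropicTuples_succ_le_sum B W s).trans ?_
  rw [← sum_filter_add_sum_filter_not _ (· ∈ W), filter_filter, filter_filter,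
    ← card_filter_mem_submodule, ← card_filter_mem_submodule]
  refine Nat.add_le_add ?_ ?_
  · calc ∑ v with v ∈ B.orthogonal W ∧ v ∈ W, #(isotropicTuples B (W ⊔ K ∙ v) s)
        ≤ ∑ v with v ∈ W, #(isotropicTuples B (W ⊔ K ∙ v) s) :=
          sum_le_sum_of_subset (monotone_filter_right _ fun _ _ h => h.2)
      _ = ∑ v with v ∈ W, #(isotropicTuples B W s) := sum_congr rfl fun v hv => by
          rw [sup_eq_left.mpr ((Submodule.span_singleton_le_iff_mem v W).mpr (mem_filter.mp hv).2)]
      _ = #{v | v ∈ W} * #(isotropicTuples B W s) := by rw [sum_const, smul_eq_mul]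
  · calc ∑ v with v ∈ B.orthogonal W ∧ v ∉ W, #(isotropicTuples B (W ⊔ K ∙ v) s)
        ≤ ∑ v with v ∈ B.orthogonal W ∧ v ∉ W, C := sum_le_sum fun v hv =>
          hC v (mem_filter.mp hv).2.1 (mem_filter.mp hv).2.2
      _ ≤ ∑ v with v ∈ B.orthogonal W, C :=
          sum_le_sum_of_subset (monotone_filter_right _ fun _ _ h => h.1)
      _ = #{v | v ∈ B.orthogonal W} * C := by rw [sum_const, smul_eq_mul]

-- Each entry either lies in the span `W` of the previous ones or increases its dimension; the
-- factor `2 ^ s` counts these patterns.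
theorem card_isotropicTuples_le_of_finrank_add (hB : B.IsAlt) (hnd : B.Nondegenerate) {h : ℕ}
    (hE : finrank K E = 2 * h) (s d : ℕ) (W : Submodule K E) (hW : W ≤ B.orthogonal W)
    (hd : finrank K W + d = h) :
    #(isotropicTuples B W s) ≤ 2 ^ s * Fintype.card K ^ (s * h + (d + 1).choose 2) := by
  set q := Fintype.card K
  have hq : 0 < q := Fintype.card_pos
  induction s generalizing d W with
  | zero => exact (card_le_one_of_subsingleton _).trans (Nat.one_le_iff_ne_zero.mpr (by positivity))
  | succ s ih =>
    have horth : finrank K (B.orthogonal W) = h + d := by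
      have := B.finrank_orthogonal hnd W
      omega
    have hin : q ^ finrank K W * #(isotropicTuples B W s) ≤
        2 ^ s * q ^ ((s + 1) * h + (d + 1).choose 2) :=
      calc q ^ finrank K W * #(isotropicTuples B W s)
          ≤ q ^ h * (2 ^ s * q ^ (s * h + (d + 1).choose 2)) :=
            Nat.mul_le_mul (Nat.pow_le_pow_right hq (by omega)) (ih d W hW hd)
        _ = 2 ^ s * q ^ ((s + 1) * h + (d + 1).choose 2) := by ring
    obtain ⟨C, hC, hout⟩ : ∃ C,
        (∀ v ∈ B.orthogonal W, v ∉ W → #(isotropicTuples B (W ⊔ K ∙ v) s) ≤ C) ∧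
          q ^ finrank K (B.orthogonal W) * C ≤ 2 ^ s * q ^ ((s + 1) * h + (d + 1).choose 2) := by
      rw [horth]
      obtain _ | d := d
      · have hself : W = B.orthogonal W := Submodule.eq_of_le_of_finrank_eq hW (by omega)
        exact ⟨0, fun v hv hvW => absurd (hself.symm ▸ hv) hvW, by simp⟩
      · refine ⟨2 ^ s * q ^ (s * h + (d + 1).choose 2), fun v hv hvW => ?_, le_of_eq ?_⟩
        · refine ih d _ (sup_span_singleton_le_orthogonal hB hW hv) ?_
          rw [Submodule.finrank_sup_span_singleton hvW]
          omega
        · rw [succ_choose_two (d + 1)]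
          ring
    calc #(isotropicTuples B W (s + 1))
        ≤ _ := (card_isotropicTuples_succ_le hC).trans (Nat.add_le_add hin hout)
      _ = 2 ^ (s + 1) * q ^ ((s + 1) * h + (d + 1).choose 2) := by ring

theorem dens_isotropicTuples_bot_le (hB : B.IsAlt) (hnd : B.Nondegenerate) {h : ℕ}
    (hE : finrank K E = 2 * h) (s : ℕ) :
    (isotropicTuples B ⊥ s).dens ≤
      2 ^ s * Fintype.card K ^ (h + 1).choose 2 / Fintype.card K ^ (s * h) := by
  have hK : (Fintype.card K : ℚ≥0) ≠ 0 := Nat.cast_ne_zero.mpr Fintype.card_ne_zero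
  have hcard : Fintype.card (Fin s → E) = Fintype.card K ^ (s * h + s * h) := by
    rw [Fintype.card_fun, Fintype.card_fin, Module.card_eq_pow_finrank (K := K), hE, ← pow_mul]
    ring
  calc (isotropicTuples B ⊥ s).dens
      ≤ 2 ^ s * Fintype.card K ^ (s * h + (h + 1).choose 2) /
          Fintype.card K ^ (s * h + s * h) := by
        rw [dens_eq_card_div_card, hcard, Nat.cast_pow]
        gcongr
        exact_mod_cast
          card_isotropicTuples_le_of_finrank_add hB hnd hE s h ⊥ bot_le (by simp)
    _ = 2 ^ s * Fintype.card K ^ (h + 1).choose 2 / Fintype.card K ^ (s * h) := by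
        rw [pow_add, pow_add, mul_left_comm, mul_div_mul_left _ _ (pow_ne_zero _ hK)]

end IsotropicCount

theorem isAlt_toBilin'_J (ι R : Type*) [Fintype ι] [DecidableEq ι] [CommRing R] :
    (Matrix.toBilin' (Matrix.J ι R)).IsAlt := by
  intro x
  rw [Matrix.toBilin'_apply']
  simp [Matrix.J, Matrix.fromBlocks_mulVec, dotProduct, Matrix.neg_mulVec, mul_comm]

section ProductColoring

variable {κ V Y E : Type*}

/-- The colour of an edge whose ends have products `a k` under the forms and whose random colour is
`y`: some `k` with `a k = 1`, and `y` if there is none. -/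
noncomputable def productColor (a : κ → ZMod 2) (y : Y) : κ ⊕ Y :=
  open Classical in if h : ∃ k, a k = 1 then .inl h.choose else .inr y

theorem eq_one_of_productColor_eq_inl {a : κ → ZMod 2} {y : Y} {k : κ}
    (h : productColor a y = .inl k) : a k = 1 := by
  unfold productColor at h
  split_ifs at h with hk
  exact Sum.inl_injective h ▸ hk.choose_spec

theorem eq_zero_and_eq_of_productColor_eq_inr {a : κ → ZMod 2} {y z : Y}
    (h : productColor a y = .inr z) : a = 0 ∧ y = z := by
  unfold productColor at h
  split_ifs at h with hk
  refine ⟨funext fun k => ?_, Sum.inr_injective h⟩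
  exact by_contra fun hak => hk ⟨k, Fin.eq_one_of_ne_zero _ hak⟩

variable [AddCommGroup E] [Module (ZMod 2) E] [Fintype E] {B : LinearMap.BilinForm (ZMod 2) E}

theorem ramseyColorable_sum_of_maps [Fintype Y] {t : ℕ} (hB : B.IsAlt) (ht : Even t)
    (hE : finrank (ZMod 2) E < t) (f : κ → V → E) (g : Sym2 V → Y)
    (hfg : ∀ e : Fin t ↪ V, ¬ ((∀ k, f k ∘ e ∈ isotropicTuples B ⊥ t) ∧
      g ∘ Sym2.map e ∈ monochromaticColorings (Fin t) Y)) :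
    RamseyColorable V (κ ⊕ Y) t := by
  have hsymm (x y : E) : B x y = B y x := by rw [← hB.neg_eq, ZMod.neg_eq_self_mod_two]
  refine .of_forall_embedding (fun x y => productColor (fun k => B (f k x) (f k y)) (g s(x, y)))
    (fun x y => by simp only [hsymm (f _ x), Sym2.eq_swap (a := x)]) ?_
  rintro e (k | c) hc
  · have hindep : LinearIndependent (ZMod 2) fun i => f k (e i) :=
      linearIndependent_of_pairwise_eq_one hB (by simpa using ht) fun i j hij =>
        eq_one_of_productColor_eq_inl (a := fun k => B (f k (e i)) (f k (e j))) (hc i j hij)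
    have hle := hindep.fintype_card_le_finrank
    rw [Fintype.card_fin] at hle
    omega
  · have hcolor (i j : Fin t) (hij : i ≠ j) :=
      eq_zero_and_eq_of_productColor_eq_inr (hc i j hij)
    refine hfg e ⟨fun k => mem_isotropicTuples.mpr ⟨fun i j => ?_, fun i => by simp⟩, ?_⟩
    · obtain rfl | hij := eq_or_ne i j
      · exact hB.self_eq_zero _
      · exact congrFun (hcolor i j hij).1 k
    · exact mem_monochromaticColorings.mpr ⟨c, fun i j hij => (hcolor i j hij).2⟩

end ProductColoring

theorem union_bound_lt_one {N h k : ℕ} (hh : 0 < h)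
    (hN : (N : ℝ) ≤ 2 ^ ((3 * k / 4 + 1) * h - k : ℝ)) :
    (N : ℚ≥0) ^ (2 * h + 2) *
      ((2 ^ (2 * h + 2) * 2 ^ (h + 1).choose 2 / 2 ^ ((2 * h + 2) * h)) ^ k *
        (2 / 2 ^ (2 * h + 2).choose 2)) < 1 := by
  have hisotropic : (2 : ℝ) ^ (2 * h + 2) * 2 ^ (h + 1).choose 2 / 2 ^ ((2 * h + 2) * h) =
      2 ^ (-((h + 1) * (3 * h - 4) / 2) : ℝ) := by
    simp only [← Real.rpow_natCast, ← Real.rpow_add two_pos, ← Real.rpow_sub two_pos,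
      Nat.cast_choose_two]
    push_cast
    ring_nf
  have hmono : (2 : ℝ) / 2 ^ (2 * h + 2).choose 2 = 2 ^ (1 - (h + 1) * (2 * h + 1) : ℝ) := by
    rw [← Real.rpow_natCast, Real.rpow_sub two_pos, Real.rpow_one, Nat.cast_choose_two]
    push_cast
    ring_nf
  rw [← NNRat.cast_lt (K := ℝ)]
  push_cast
  rw [hisotropic, hmono]
  calc (N : ℝ) ^ (2 * h + 2) * ((2 ^ (-((h + 1) * (3 * h - 4) / 2) : ℝ)) ^ k *
        2 ^ (1 - (h + 1) * (2 * h + 1) : ℝ))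
      ≤ (2 ^ ((3 * k / 4 + 1) * h - k : ℝ)) ^ (2 * h + 2) *
          ((2 ^ (-((h + 1) * (3 * h - 4) / 2) : ℝ)) ^ k *
            2 ^ (1 - (h + 1) * (2 * h + 1) : ℝ)) := by
        gcongr
    _ = (2 : ℝ) ^ (-h : ℝ) := by
        simp only [← Real.rpow_mul_natCast zero_le_two, ← Real.rpow_add two_pos]
        push_cast
        ring_nf
    _ < 1 := Real.rpow_lt_one_of_one_lt_of_neg one_lt_two (by simpa using hh)

theorem ramseyColorable_sum_bool {κ V : Type*} [Fintype κ] [Fintype V] {h : ℕ} (hh : 0 < h)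
    (hV : (Fintype.card V : ℝ) ≤
      2 ^ ((3 * Fintype.card κ / 4 + 1) * h - Fintype.card κ : ℝ)) :
    RamseyColorable V (κ ⊕ Bool) (2 * h + 2) := by
  let B := Matrix.toBilin' (Matrix.J (Fin h) (ZMod 2))
  have hB : B.IsAlt := isAlt_toBilin'_J _ _
  have hnd : B.Nondegenerate := LinearMap.BilinForm.nondegenerate_toBilin'_of_det_ne_zero' _
    (Matrix.isUnit_det_J _ _).ne_zero
  have hE : finrank (ZMod 2) (Fin h ⊕ Fin h → ZMod 2) = 2 * h := by simp [two_mul]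
  have hA := dens_isotropicTuples_bot_le hB hnd hE (2 * h + 2)
  have hM := dens_monochromaticColorings_le (Fin (2 * h + 2)) Bool
  rw [ZMod.card, Nat.cast_two] at hA
  rw [Fintype.card_bool, Fintype.card_fin, Nat.cast_two] at hM
  have hunion : (Fintype.card V : ℚ≥0) ^ Fintype.card (Fin (2 * h + 2)) *
      ((isotropicTuples B ⊥ (2 * h + 2)).dens ^ Fintype.card κ *
        (monochromaticColorings (Fin (2 * h + 2)) Bool).dens) < 1 := by
    rw [Fintype.card_fin]
    exact (mul_le_mul_right (mul_le_mul' (pow_le_pow_left₀ zero_le hA _) hM) _).trans_lt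
      (union_bound_lt_one hh hV)
  obtain ⟨f, g, hfg⟩ := exists_maps_avoiding hunion
  exact ramseyColorable_sum_of_maps hB ⟨h + 1, by ring⟩ (by omega) f g hfg

theorem ceil_two_rpow_le {a b : ℝ} (hab : a + 1 ≤ b) (hb : 1 ≤ b) :
    (⌈(2 : ℝ) ^ a⌉₊ : ℝ) ≤ 2 ^ b := by
  calc (⌈(2 : ℝ) ^ a⌉₊ : ℝ) ≤ 2 ^ a + 1 := (Nat.ceil_lt_add_one (by positivity)).le
    _ ≤ 2 ^ (b - 1) + 2 ^ (b - 1) := by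
      gcongr
      · exact one_le_two
      · linarith
      · exact Real.one_le_rpow one_le_two (by linarith)
    _ = 2 ^ b := by rw [← mul_two, ← Real.rpow_add_one two_ne_zero, sub_add_cancel]

theorem four_color_ramsey_lower_bound_general {ℓ : ℕ} (hℓ : 2 ≤ ℓ) {ε : ℝ} (hε : 0 < ε) :
    ∃ t₀ : ℕ, ∀ t : ℕ, t₀ ≤ t →
      RamseyColorable (Fin ⌈(2 : ℝ) ^ ((3 * ℓ / 8 - 1 / 4 - ε) * t)⌉₊) (Fin ℓ) t := by
  obtain ⟨k, rfl⟩ := Nat.exists_eq_add_of_le' hℓ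
  refine ⟨max 6 ⌈(3 * k + 3) / ε⌉₊, fun t ht => ?_⟩
  have htε : 3 * k + 3 ≤ t * ε :=
    (div_le_iff₀ hε).mp (Nat.ceil_le.mp ((le_max_right _ _).trans ht))
  obtain ⟨h, hh, hht, hth⟩ : ∃ h, 2 ≤ h ∧ 2 * h + 2 ≤ t ∧ t ≤ 2 * h + 3 :=
    ⟨(t - 2) / 2, by omega, by omega, by omega⟩
  have hh' : (2 : ℝ) ≤ h := by exact_mod_cast hh
  have hth' : (t : ℝ) ≤ 2 * h + 3 := by exact_mod_cast hth
  have hcard : (⌈(2 : ℝ) ^ ((3 * (k + 2 : ℕ) / 8 - 1 / 4 - ε) * t)⌉₊ : ℝ) ≤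
      2 ^ ((3 * k / 4 + 1) * h - k : ℝ) := by
    refine ceil_two_rpow_le ?_ ?_
    · push_cast
      nlinarith [mul_le_mul_of_nonneg_left hth' k.cast_nonneg]
    · nlinarith [mul_le_mul_of_nonneg_left hh' k.cast_nonneg]
  let e : Fin k ⊕ Bool ≃ Fin (k + 2) :=
    (Equiv.sumCongr (.refl _) finTwoEquiv.symm).trans finSumFinEquiv
  exact ((ramseyColorable_sum_bool (by omega) (by simpa using hcard)).mono hht).congr_colors e

/-- For every `ε > 0` there is `t₀` such that for all `t ≥ t₀`, the 4-color Ramsey number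
satisfies `r(t;4) > 2^{(5/4 - ε) t}`: there is a 4-coloring of the edges of the complete
graph on `⌈2^{(5/4 - ε) t}⌉` vertices with no monochromatic clique of size `t`. -/
theorem four_color_ramsey_lower_bound (ε : ℝ) (hε : 0 < ε) :
    ∃ t₀ : ℕ, ∀ t : ℕ, t₀ ≤ t →
      ∃ χ : Fin (⌈(2 : ℝ) ^ ((5 / 4 - ε) * t)⌉₊) →
            Fin (⌈(2 : ℝ) ^ ((5 / 4 - ε) * t)⌉₊) → Fin 4,
        (∀ x y, χ x y = χ y x) ∧
        ¬ ∃ (S : Finset (Fin (⌈(2 : ℝ) ^ ((5 / 4 - ε) * t)⌉₊))) (c : Fin 4),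
            S.card = t ∧ ∀ x ∈ S, ∀ y ∈ S, x ≠ y → χ x y = c := by
  have hexp : 3 * ((4 : ℕ) : ℝ) / 8 - 1 / 4 = 5 / 4 := by norm_num
  exact hexp ▸ four_color_ramsey_lower_bound_general (by norm_num : 2 ≤ 4) hε
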